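/- Patterson–Sullivan measures {μ_v}_{v∈G} on the Bowditch boundary ∂G, constructed through the action of G on its Cayley graph, have no atoms at bounded parabolic points: μ_v({q}) = 0 for every bounded parabolic point q ∈ ∂G and every v ∈ G. -/

import Mathlib

open Filter Topology Set
open scoped ENNReal NNReal

/-- The word length of `g` with respect to a generating set `S`. -/
noncomputable def wlen {G : Type*} [Group G] (S : Set G) (g : G) : ℕ :=
  sInf {n : ℕ | ∃ w : List G, (∀ x ∈ w, x ∈ S) ∧ w.length = n ∧ w.prod = g}

/-- The word metric on `G` with respect to a generating set `S`. -/
noncomputable def wdist {G : Type*} [Group G] (S : Set G) (g h : G) : ℕ :=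
  wlen S (g⁻¹ * h)

/-- The exponential growth rate of a subset `A` of `G` with respect to the word metric of `S`:
`limsup (1/n) log #(A ∩ B(1,n))`. -/
noncomputable def growthRateOn {G : Type*} [Group G] (S : Set G) (A : Set G) : ℝ :=
  Filter.limsup
    (fun n : ℕ => Real.log (Nat.card {g : G // g ∈ A ∧ wlen S g ≤ n}) / (n : ℝ))
    Filter.atTop

/-- The exponential growth rate of `G` with respect to the word metric of `S`. -/
noncomputable def growthRate {G : Type*} [Group G] (S : Set G) : ℝ :=
  growthRateOn S Set.univ

/-- `S` is a finite symmetric generating set of `G` not containing the identity. -/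
def IsSymmGen {G : Type*} [Group G] (S : Set G) : Prop :=
  S.Finite ∧ Subgroup.closure S = ⊤ ∧ (∀ s ∈ S, s⁻¹ ∈ S) ∧ (1 : G) ∉ S

/-- A group is elementary if it is finite or a finite extension of a cyclic group,
i.e. it has a cyclic subgroup of finite index. -/
def IsElementaryGroup (G : Type*) [Group G] : Prop :=
  ∃ (g : G) (H : Subgroup G), H = Subgroup.zpowers g ∧ H.FiniteIndex

/-- The critical exponent of the Poincaré series `∑_{a ∈ A} exp(-s |a|_S)`. -/
noncomputable def poincareExp {G : Type*} [Group G] (S : Set G) (A : Set G) : ℝ :=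
  sInf {s : ℝ | Summable (fun a : A => Real.exp (-(s * (wlen S (a : G) : ℝ))))}
/-- A metric space is geodesic if every pair of points is joined by an isometrically
parametrized path. -/
def IsGeodesicSpace (X : Type*) [MetricSpace X] : Prop :=
  ∀ x y : X, ∃ f : ℝ → X, f 0 = x ∧ f (dist x y) = y ∧
    ∀ s ∈ Set.Icc (0 : ℝ) (dist x y), ∀ t ∈ Set.Icc (0 : ℝ) (dist x y),
      dist (f s) (f t) = |s - t|

/-- Gromov hyperbolicity, via the four-point condition on Gromov products. -/
def IsGromovHyperbolic (X : Type*) [MetricSpace X] : Prop :=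
  ∃ δ : ℝ, 0 ≤ δ ∧ ∀ x y z w : X,
    min (dist x w + dist y w - dist x y) (dist y w + dist z w - dist y z) - 2 * δ ≤
      dist x w + dist z w - dist x z

/-- A (metrically) proper isometric action: orbits are discrete with finite multiplicity. -/
def ProperAction {G : Type*} [Group G] {X : Type*} [MetricSpace X]
    (ρ : G →* X ≃ᵢ X) : Prop :=
  ∀ x : X, ∀ r : ℝ, {g : G | dist x (ρ g x) ≤ r}.Finite

/-- The (setwise) stabilizer of a subset `U` of `X` under the action `ρ`. -/
def horoStab {G : Type*} [Group G] {X : Type*} [MetricSpace X]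
    (ρ : G →* X ≃ᵢ X) (U : Set X) : Set G :=
  {g : G | (fun x => ρ g x) '' U = U}

/-- A cusp-uniform action: a proper isometric action together with a `G`-invariant system of
open horoballs (each with infinite, parabolic, stabilizer) such that the action on the
complement of the horoballs is cocompact. -/
structure IsCuspUniform {G : Type*} [Group G] {X : Type*} [MetricSpace X]
    (ρ : G →* X ≃ᵢ X) (𝕌 : Set (Set X)) : Prop where
  proper : ProperAction ρ
  horo_open : ∀ U ∈ 𝕌, IsOpen U
  horo_inv : ∀ (g : G), ∀ U ∈ 𝕌, (fun x => ρ g x) '' U ∈ 𝕌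
  horo_par : ∀ U ∈ 𝕌, (horoStab ρ U).Infinite
  cocompact : ∃ K : Set X, IsCompact K ∧ (⋃₀ 𝕌)ᶜ ⊆ ⋃ g : G, (fun x => ρ g x) '' K

/-- A witness that `G` is hyperbolic relative to the collection `Ps` of peripheral subgroups:
a cusp-uniform action on a proper geodesic hyperbolic space whose horoball stabilizers
(the maximal parabolic subgroups) are precisely the conjugates of members of `Ps`. -/
structure RelHypWitness (G : Type*) [Group G] (Ps : Set (Subgroup G)) where
  X : Type
  [ms : MetricSpace X]
  proper : ProperSpace X
  geodesic : IsGeodesicSpace X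
  hyperbolic : IsGromovHyperbolic X
  ρ : G →* X ≃ᵢ X
  horoballs : Set (Set X)
  cusp : IsCuspUniform ρ horoballs
  peri_max : ∀ U ∈ horoballs, ∃ P ∈ Ps, ∃ g : G,
      horoStab ρ U = (fun x => g * x * g⁻¹) '' (P : Set G)
  peri_real : ∀ P ∈ Ps, ∃ U ∈ horoballs, horoStab ρ U = (P : Set G)

/-- `G` is hyperbolic relative to the collection of subgroups `Ps`. -/
def IsRelHypWrt (G : Type*) [Group G] (Ps : Set (Subgroup G)) : Prop :=
  Nonempty (RelHypWitness G Ps)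

/-- `G` is a relatively hyperbolic group (relative to some finite collection of subgroups). -/
def IsRelativelyHyperbolicGroup (G : Type*) [Group G] : Prop :=
  ∃ Ps : Set (Subgroup G), Ps.Finite ∧ IsRelHypWrt G Ps

/-- The growth rate of the quotient group `G ⧸ Γ` with respect to the image of `S`. -/
noncomputable def quotGrowthRate {G : Type*} [Group G] (S : Set G)
    (Γ : Subgroup G) (h : Γ.Normal) : ℝ :=
  @growthRate (G ⧸ Γ) (@QuotientGroup.Quotient.group G _ Γ h)
    ((fun g : G => (QuotientGroup.mk g : G ⧸ Γ)) '' S)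

/-- The quotient `G ⧸ Γ` is a relatively hyperbolic group. -/
def quotIsRelHyp {G : Type*} [Group G] (Γ : Subgroup G) (h : Γ.Normal) : Prop :=
  @IsRelativelyHyperbolicGroup (G ⧸ Γ) (@QuotientGroup.Quotient.group G _ Γ h)

/-- The critical exponent of the orbital counting function of `A ⊆ G` for the action `ρ`
at basepoint `o`. -/
noncomputable def critExpOn {G : Type*} [Group G] {X : Type*} [MetricSpace X]
    (ρ : G →* X ≃ᵢ X) (o : X) (A : Set G) : ℝ :=
  Filter.limsup
    (fun n : ℕ =>
      Real.log (Nat.card {g : G // g ∈ A ∧ dist o (ρ g o) ≤ (n : ℝ)}) / (n : ℝ))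
    Filter.atTop

/-- The critical exponent (growth rate) of the action `ρ` of `G` on `X` at basepoint `o`. -/
noncomputable def critExp {G : Type*} [Group G] {X : Type*} [MetricSpace X]
    (ρ : G →* X ≃ᵢ X) (o : X) : ℝ :=
  critExpOn ρ o Set.univ

/-- The displacement of the coset `c ∈ G ⧸ Γ` in the quotient metric space `X ⧸ Γ`:
`d̄(Γo, Γ(go)) = inf_{γ ∈ Γ} d(o, γ g o)`. -/
noncomputable def quotDisp {G : Type*} [Group G] {X : Type*} [MetricSpace X]
    (ρ : G →* X ≃ᵢ X) (o : X) (Γ : Subgroup G) (c : G ⧸ Γ) : ℝ :=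
  ⨅ g : {g : G // (QuotientGroup.mk g : G ⧸ Γ) = c}, dist o (ρ (g : G) o)

/-- The critical exponent of the induced action of `G ⧸ Γ` on the quotient metric space
`X ⧸ Γ` equipped with the quotient metric. -/
noncomputable def quotCritExp {G : Type*} [Group G] {X : Type*} [MetricSpace X]
    (ρ : G →* X ≃ᵢ X) (o : X) (Γ : Subgroup G) : ℝ :=
  Filter.limsup
    (fun n : ℕ =>
      Real.log (Nat.card {c : G ⧸ Γ // quotDisp ρ o Γ c ≤ (n : ℝ)}) / (n : ℝ))
    Filter.atTop

/-- The parabolic gap property: every maximal parabolic subgroup (horoball stabilizer) has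
critical exponent strictly less than that of `G`. -/
def ParabolicGap {G : Type*} [Group G] {X : Type*} [MetricSpace X]
    (ρ : G →* X ≃ᵢ X) (o : X) (𝕌 : Set (Set X)) : Prop :=
  ∀ U ∈ 𝕌, critExpOn ρ o (horoStab ρ U) < critExp ρ o
/-- `γ` restricted to `{0, …, m}` is a geodesic in the Cayley graph of `(G,S)`. -/
def IsGeodesicSeq {G : Type*} [Group G] (S : Set G) (γ : ℕ → G) (m : ℕ) : Prop :=
  ∀ i ≤ m, ∀ j ≤ m, wdist S (γ i) (γ j) = ((i : ℤ) - (j : ℤ)).natAbs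

/-- `γ` is a geodesic ray in the Cayley graph of `(G,S)`. -/
def IsGeodesicRay {G : Type*} [Group G] (S : Set G) (γ : ℕ → G) : Prop :=
  ∀ i j : ℕ, wdist S (γ i) (γ j) = ((i : ℤ) - (j : ℤ)).natAbs

/-- The collection `ℙ` of peripheral (left) cosets of the peripheral subgroups `Ps`. -/
def periCosets {G : Type*} [Group G] (Ps : Set (Subgroup G)) : Set (Set G) :=
  {A | ∃ g : G, ∃ P ∈ Ps, A = (fun x => g * x) '' (P : Set G)}

/-- The point `γ i` of the geodesic `γ : {0,…,m} → G` is `(ε,R)`-deep in some member of `ℙ`: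
both endpoints of `γ` lie outside `B(γ i, R)` and `γ ∩ B(γ i, R) ⊆ N_ε(A)` for some `A ∈ ℙ`. -/
def deepAt {G : Type*} [Group G] (S : Set G) (ℙ : Set (Set G)) (γ : ℕ → G) (m i : ℕ)
    (ε R : ℝ) : Prop :=
  ∃ A ∈ ℙ, R < (wdist S (γ 0) (γ i) : ℝ) ∧ R < (wdist S (γ m) (γ i) : ℝ) ∧
    ∀ j ≤ m, (wdist S (γ i) (γ j) : ℝ) ≤ R → ∃ a ∈ A, (wdist S (γ j) a : ℝ) ≤ ε

/-- The point `γ i` is an `(ε,R)`-transition point of the geodesic `γ : {0,…,m} → G`. -/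
def transitionAt {G : Type*} [Group G] (S : Set G) (ℙ : Set (Set G)) (γ : ℕ → G) (m i : ℕ)
    (ε R : ℝ) : Prop :=
  ¬ deepAt S ℙ γ m i ε R

/-- The point `γ i` of the geodesic ray `γ` is `(ε,R)`-deep in some member of `ℙ`. -/
def deepAtRay {G : Type*} [Group G] (S : Set G) (ℙ : Set (Set G)) (γ : ℕ → G) (i : ℕ)
    (ε R : ℝ) : Prop :=
  ∃ A ∈ ℙ, R < (wdist S (γ 0) (γ i) : ℝ) ∧
    ∀ j : ℕ, (wdist S (γ i) (γ j) : ℝ) ≤ R → ∃ a ∈ A, (wdist S (γ j) a : ℝ) ≤ ε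

/-- The point `γ i` is an `(ε,R)`-transition point of the geodesic ray `γ`. -/
def transitionAtRay {G : Type*} [Group G] (S : Set G) (ℙ : Set (Set G)) (γ : ℕ → G) (i : ℕ)
    (ε R : ℝ) : Prop :=
  ¬ deepAtRay S ℙ γ i ε R

/-- The cone `Ω_r(g)`: elements `h` such that some word geodesic `[1,h]` meets `B(g,r)`. -/
def cone {G : Type*} [Group G] (S : Set G) (r : ℝ) (g : G) : Set G :=
  {h | ∃ (γ : ℕ → G) (m : ℕ), IsGeodesicSeq S γ m ∧ γ 0 = 1 ∧ γ m = h ∧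
      ∃ i ≤ m, (wdist S (γ i) g : ℝ) ≤ r}

/-- The partial cone `Ω_{r,ε,R}(g)`: elements `h` such that some word geodesic `[1,h]` meets
`B(g,r)` and, moreover, either `d(1,h) ≤ d(1,g) + 2R` or this geodesic has an
`(ε,R)`-transition point at distance at most `2R` from `g`. -/
def partialCone {G : Type*} [Group G] (S : Set G) (ℙ : Set (Set G)) (r ε R : ℝ) (g : G) :
    Set G :=
  {h | ∃ (γ : ℕ → G) (m : ℕ), IsGeodesicSeq S γ m ∧ γ 0 = 1 ∧ γ m = h ∧
      (∃ i ≤ m, (wdist S (γ i) g : ℝ) ≤ r) ∧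
      ((wdist S 1 h : ℝ) ≤ (wdist S 1 g : ℝ) + 2 * R ∨
        ∃ i ≤ m, transitionAt S ℙ γ m i ε R ∧ (wdist S (γ i) g : ℝ) ≤ 2 * R)}

/-- The partial cone `Ω_{ε,R}(g)` of geodesics passing through `g`. -/
def partialConeThrough {G : Type*} [Group G] (S : Set G) (ℙ : Set (Set G)) (ε R : ℝ)
    (g : G) : Set G :=
  {h | ∃ (γ : ℕ → G) (m : ℕ), IsGeodesicSeq S γ m ∧ γ 0 = 1 ∧ γ m = h ∧
      (∃ i ≤ m, γ i = g) ∧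
      ((wdist S 1 h : ℝ) ≤ (wdist S 1 g : ℝ) + 2 * R ∨
        ∃ i ≤ m, transitionAt S ℙ γ m i ε R ∧ (wdist S (γ i) g : ℝ) ≤ 2 * R)}

/-- The annulus `A(g,n,Δ) = {h : n − Δ ≤ d(1,h) − d(1,g) < n + Δ}`. -/
def annulus {G : Type*} [Group G] (S : Set G) (g : G) (n Δ : ℝ) : Set G :=
  {h | n - Δ ≤ (wdist S 1 h : ℝ) - (wdist S 1 g : ℝ) ∧
       (wdist S 1 h : ℝ) - (wdist S 1 g : ℝ) < n + Δ}
/-- The boundary of `G` in the compactification `Z ⊇ ι(G)`. -/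
def bdryZ {G : Type*} {Z : Type*} (ι : G → Z) : Set Z := (Set.range ι)ᶜ

/-- Geodesic rays in `𝒢(G,S)` issuing from `v` and converging to `ξ ∈ Z`. -/
def raysTo {G : Type*} [Group G] {Z : Type*} [TopologicalSpace Z] (S : Set G) (ι : G → Z)
    (ξ : Z) (v : G) : Set (ℕ → G) :=
  {γ | γ 0 = v ∧ IsGeodesicRay S γ ∧
    Filter.Tendsto (fun n => ι (γ n)) Filter.atTop (nhds ξ)}

/-- Geodesic rays in `𝒢(G,S)` converging to `ξ ∈ Z` (with arbitrary initial point). -/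
def raysEnding {G : Type*} [Group G] {Z : Type*} [TopologicalSpace Z] (S : Set G)
    (ι : G → Z) (ξ : Z) : Set (ℕ → G) :=
  {γ | IsGeodesicRay S γ ∧ Filter.Tendsto (fun n => ι (γ n)) Filter.atTop (nhds ξ)}

/-- The set of conical limit points of the action of `G` on the boundary `Z ∖ ι(G)`. -/
def conicalPts (G : Type*) [Group G] {Z : Type*} [TopologicalSpace Z] [MulAction G Z]
    (ι : G → Z) : Set Z :=
  {ξ | ξ ∈ bdryZ ι ∧ ∃ (gs : ℕ → G) (a b : Z), a ∈ bdryZ ι ∧ b ∈ bdryZ ι ∧ a ≠ b ∧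
      ∀ ζ ∈ bdryZ ι, ζ ≠ ξ →
        Filter.Tendsto (fun n => gs n • ξ) Filter.atTop (nhds a) ∧
        Filter.Tendsto (fun n => gs n • ζ) Filter.atTop (nhds b)}

/-- `q` is a bounded parabolic point: its stabilizer is infinite and acts properly and
cocompactly on `∂G ∖ {q}`. -/
def IsBddParabolicPt (G : Type*) [Group G] {Z : Type*} [TopologicalSpace Z] [MulAction G Z]
    (ι : G → Z) (q : Z) : Prop :=
  q ∈ bdryZ ι ∧ {g : G | g • q = q}.Infinite ∧
    (∃ K : Set Z, IsCompact K ∧ K ⊆ bdryZ ι \ {q} ∧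
      ∀ ξ ∈ bdryZ ι \ {q}, ∃ g : G, g • q = q ∧ g • ξ ∈ K) ∧
    ∀ K : Set Z, IsCompact K → K ⊆ bdryZ ι \ {q} →
      {g : G | g • q = q ∧ ((fun z : Z => g • z) '' K ∩ K).Nonempty}.Finite

/-- The shadow `Π_r(g)`: boundary points `ξ` such that some geodesic ray `[1,ξ]` meets
the ball `B(g,r)`. -/
def shadow {G : Type*} [Group G] {Z : Type*} [TopologicalSpace Z] (S : Set G) (ι : G → Z)
    (r : ℝ) (g : G) : Set Z :=
  {ξ | ξ ∈ bdryZ ι ∧ ∃ γ ∈ raysTo S ι ξ 1, ∃ n : ℕ, (wdist S (γ n) g : ℝ) ≤ r}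

/-- The strong shadow `ϖ_r(g)`: boundary points `ξ` such that every geodesic ray `[1,ξ]`
meets the ball `B(g,r)`. -/
def strongShadow {G : Type*} [Group G] {Z : Type*} [TopologicalSpace Z] (S : Set G)
    (ι : G → Z) (r : ℝ) (g : G) : Set Z :=
  {ξ | ξ ∈ bdryZ ι ∧ (raysTo S ι ξ 1).Nonempty ∧
      ∀ γ ∈ raysTo S ι ξ 1, ∃ n : ℕ, (wdist S (γ n) g : ℝ) ≤ r}

/-- The partial shadow `Π_{r,ε,R}(g)`: boundary points `ξ` such that some geodesic ray
`[1,ξ]` meets `B(g,r)` and contains an `(ε,R)`-transition point in `B(g,2R)`. -/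
def partialShadow {G : Type*} [Group G] {Z : Type*} [TopologicalSpace Z] (S : Set G)
    (ι : G → Z) (ℙ : Set (Set G)) (r ε R : ℝ) (g : G) : Set Z :=
  {ξ | ξ ∈ bdryZ ι ∧ ∃ γ ∈ raysTo S ι ξ 1,
      (∃ n : ℕ, (wdist S (γ n) g : ℝ) ≤ r) ∧
      ∃ i : ℕ, transitionAtRay S ℙ γ i ε R ∧ (wdist S (γ i) g : ℝ) ≤ 2 * R}

/-- The limit set of `A ⊆ G`: accumulation points of `ι(A)` in the boundary. -/
def limitSet {G : Type*} {Z : Type*} [TopologicalSpace Z] (ι : G → Z) (A : Set G) : Set Z :=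
  bdryZ ι ∩ closure (ι '' A)

/-- The Busemann (horofunction) limit `b_γ(x) = lim_t (d(x, γ(t)) − t)` along a ray `γ`. -/
noncomputable def busemann {G : Type*} [Group G] (S : Set G) (γ : ℕ → G) (x : G) : ℝ :=
  Filter.limsup (fun t : ℕ => (wdist S x (γ t) : ℝ) - (t : ℝ)) Filter.atTop

/-- The horofunction cocycle `B_ξ(x,y) = sup_{γ : γ₊ = ξ} (b_γ(x) − b_γ(y))` at `ξ`. -/
noncomputable def horoCocycle {G : Type*} [Group G] {Z : Type*} [TopologicalSpace Z]
    (S : Set G) (ι : G → Z) (ξ : Z) (x y : G) : ℝ :=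
  sSup ((fun γ => busemann S γ x - busemann S γ y) '' raysEnding S ι ξ)

/-- `Z` is a compactification of the Cayley graph of `(G,S)` by a boundary on which `G` acts
geometrically finitely: `ι` is an equivariant dense embedding of `G`, geodesic rays converge
to boundary points, every boundary point is the endpoint of geodesic rays from every vertex,
and every boundary point is either conical or bounded parabolic. -/
def IsGeomFinBoundary (G : Type*) [Group G] {Z : Type*} [TopologicalSpace Z] [MulAction G Z]
    (S : Set G) (ι : G → Z) : Prop :=
  Function.Injective ι ∧
  (∀ g h : G, g • ι h = ι (g * h)) ∧
  (∀ g : G, Continuous (fun z : Z => g • z)) ∧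
  Dense (Set.range ι) ∧
  (bdryZ ι).Nontrivial ∧
  (∀ ξ ∈ bdryZ ι, ∀ v : G, (raysTo S ι ξ v).Nonempty) ∧
  (∀ γ : ℕ → G, IsGeodesicRay S γ →
      ∃ ξ ∈ bdryZ ι, Filter.Tendsto (fun n => ι (γ n)) Filter.atTop (nhds ξ)) ∧
  (∀ ξ ∈ bdryZ ι, ξ ∈ conicalPts G ι ∨ IsBddParabolicPt G ι ξ)
open MeasureTheory

/-- A `σ`-dimensional visual density: a `G`-equivariant family of finite positive Radon
measures on the boundary `Z ∖ ι(G)`, mutually absolutely continuous with Radon–Nikodym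
derivatives pinched between `exp(∓σ d(v,w))` (up to a uniform multiplicative constant). -/
def IsVisualDensity {G : Type*} [Group G] {Z : Type*} [MetricSpace Z] [MeasurableSpace Z]
    [MulAction G Z] (S : Set G) (ι : G → Z) (σ : ℝ) (μ : G → Measure Z) : Prop :=
  (∀ v : G, IsFiniteMeasure (μ v)) ∧ (∀ v : G, μ v ≠ 0) ∧
  (∀ v : G, μ v (Set.range ι) = 0) ∧
  (∀ g v : G, μ (g * v) = Measure.map (fun z : Z => g • z) (μ v)) ∧
  ∃ C : ℝ, 0 < C ∧ ∀ v w : G, ∀ A : Set Z,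
    ENNReal.ofReal (C⁻¹ * Real.exp (-(σ * (wdist S v w : ℝ)))) * μ w A ≤ μ v A ∧
    μ v A ≤ ENNReal.ofReal (C * Real.exp (σ * (wdist S v w : ℝ))) * μ w A

/-- A `σ`-dimensional quasi-conformal density: a visual density whose Radon–Nikodym
derivatives satisfy `dμ_v/dμ_w(ξ) ≍ exp(−σ B_ξ(v,w))` at almost every conical point `ξ`. -/
def IsQuasiConformalDensity {G : Type*} [Group G] {Z : Type*} [MetricSpace Z]
    [MeasurableSpace Z] [MulAction G Z] (S : Set G) (ι : G → Z) (σ : ℝ)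
    (μ : G → Measure Z) : Prop :=
  IsVisualDensity S ι σ μ ∧
  ∃ C : ℝ, 0 < C ∧ ∀ v w : G,
    ∀ᵐ ξ ∂(μ w), ξ ∈ conicalPts G ι →
      ENNReal.ofReal (C⁻¹ * Real.exp (-(σ * horoCocycle S ι ξ v w))) ≤
          (μ v).rnDeriv (μ w) ξ ∧
        (μ v).rnDeriv (μ w) ξ ≤
          ENNReal.ofReal (C * Real.exp (-(σ * horoCocycle S ι ξ v w)))

/-- The weight `H(d(v,g)) e^{−s d(v,g)}` of the orbit point `g` in Patterson's construction. -/
noncomputable def psWeight {G : Type*} [Group G] (S : Set G) (H : ℝ → ℝ) (s : ℝ)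
    (v g : G) : ℝ≥0∞ :=
  ENNReal.ofReal (H (wdist S v g : ℝ) * Real.exp (-(s * (wdist S v g : ℝ))))

/-- The normalized approximating measure `μ_v^s` in Patterson's construction. -/
noncomputable def psApprox {G : Type*} [Group G] {Z : Type*} [MeasurableSpace Z] (S : Set G)
    (ι : G → Z) (H : ℝ → ℝ) (s : ℝ) (v : G) : Measure Z :=
  (∑' g : G, psWeight S H s 1 g)⁻¹ •
    Measure.sum (fun g : G => psWeight S H s v g • Measure.dirac (ι g))

/-- Patterson's slowly growing adjustment function `H`: monotone, positive, subexponentially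
growing, making the adjusted Poincaré series diverge exactly up to the growth rate `δ_G`. -/
def IsPattersonFunction {G : Type*} [Group G] (S : Set G) (H : ℝ → ℝ) : Prop :=
  Monotone H ∧ (∀ t : ℝ, 0 < H t) ∧
  (∀ ε > (0 : ℝ), ∃ t₀ : ℝ, ∀ t > t₀, ∀ a > (0 : ℝ),
      H (a + t) ≤ Real.exp (a * ε) * H t) ∧
  (∀ s : ℝ, s ≤ growthRate S →
      ¬ Summable (fun g : G => H (wdist S 1 g : ℝ) * Real.exp (-(s * (wdist S 1 g : ℝ))))) ∧
  (∀ s : ℝ, growthRate S < s →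
      Summable (fun g : G => H (wdist S 1 g : ℝ) * Real.exp (-(s * (wdist S 1 g : ℝ)))))

/-- `μ` is a family of Patterson–Sullivan measures for `(G,S)` on the compactification `Z`:
a weak-* limit, along a sequence `s_i ↓ δ_G`, of the normalized measures
`μ_v^{s}` built from a Patterson adjustment function `H`. -/
def IsPSMeasures {G : Type*} [Group G] {Z : Type*} [MetricSpace Z] [MeasurableSpace Z]
    (S : Set G) (ι : G → Z) (μ : G → Measure Z) : Prop :=
  (∀ v : G, IsFiniteMeasure (μ v)) ∧
  ∃ (H : ℝ → ℝ) (sq : ℕ → ℝ), IsPattersonFunction S H ∧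
    (∀ n : ℕ, growthRate S < sq n) ∧
    Filter.Tendsto sq Filter.atTop (nhds (growthRate S)) ∧
    ∀ (v : G) (f : C(Z, ℝ)),
      Filter.Tendsto (fun n => ∫ z, f z ∂(psApprox S ι H (sq n) v)) Filter.atTop
        (nhds (∫ z, f z ∂(μ v)))

section WordLength

variable {G : Type*} [Group G] {S : Set G}

lemma IsSymmGen.exists_word (hS : IsSymmGen S) (g : G) :
    ∃ w : List G, (∀ x ∈ w, x ∈ S) ∧ w.prod = g := by
  have hg : g ∈ (Subgroup.closure S).toSubmonoid := by simp [hS.2.1]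
  have hinv : S ∪ S⁻¹ = S := by
    refine union_eq_left.2 fun x hx => ?_
    simpa using hS.2.2.1 _ (Set.mem_inv.1 hx)
  rw [Subgroup.closure_toSubmonoid, hinv] at hg
  exact Submonoid.exists_list_of_mem_closure hg

lemma IsSymmGen.exists_geodesic_word (hS : IsSymmGen S) (g : G) :
    ∃ w : List G, (∀ x ∈ w, x ∈ S) ∧ w.length = wlen S g ∧ w.prod = g := by
  obtain ⟨w, hw, hg⟩ := hS.exists_word g
  exact Nat.sInf_mem (s := {n : ℕ | ∃ w : List G, (∀ x ∈ w, x ∈ S) ∧ w.length = n ∧ w.prod = g})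
    ⟨w.length, w, hw, rfl, hg⟩

lemma wlen_prod_le {w : List G} (hw : ∀ x ∈ w, x ∈ S) : wlen S w.prod ≤ w.length :=
  Nat.sInf_le ⟨w, hw, rfl, rfl⟩

lemma IsSymmGen.wlen_mul_le (hS : IsSymmGen S) (g h : G) :
    wlen S (g * h) ≤ wlen S g + wlen S h := by
  obtain ⟨u, hu, hul, rfl⟩ := hS.exists_geodesic_word g
  obtain ⟨v, hv, hvl, rfl⟩ := hS.exists_geodesic_word h
  rw [← hul, ← hvl, ← List.prod_append, ← List.length_append]
  exact wlen_prod_le fun x hx => (List.mem_append.1 hx).elim (hu x) (hv x)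

lemma IsSymmGen.wlen_inv_le (hS : IsSymmGen S) (g : G) : wlen S g⁻¹ ≤ wlen S g := by
  obtain ⟨u, hu, hul, rfl⟩ := hS.exists_geodesic_word g
  rw [← hul, List.prod_inv_reverse]
  refine (wlen_prod_le fun x hx => ?_).trans (by simp)
  obtain ⟨y, hy, rfl⟩ := List.mem_map.1 (List.mem_reverse.1 hx)
  exact hS.2.2.1 y (hu y hy)

lemma IsSymmGen.wlen_inv (hS : IsSymmGen S) (g : G) : wlen S g⁻¹ = wlen S g :=
  le_antisymm (hS.wlen_inv_le g) (by simpa using hS.wlen_inv_le g⁻¹)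

lemma IsSymmGen.wdist_triangle (hS : IsSymmGen S) (x y z : G) :
    wdist S x z ≤ wdist S x y + wdist S y z := by
  simpa [wdist, mul_assoc] using hS.wlen_mul_le (x⁻¹ * y) (y⁻¹ * z)

lemma wdist_mul_left (k g h : G) : wdist S (k * g) (k * h) = wdist S g h := by
  simp [wdist, mul_assoc]

lemma IsSymmGen.finite_wlen_le (hS : IsSymmGen S) (n : ℕ) : {g : G | wlen S g ≤ n}.Finite := by
  have := hS.1.to_subtype
  refine ((List.finite_length_le S n).image fun w => (w.map Subtype.val).prod).subset fun g hg => ?_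
  obtain ⟨w, hw, hl, rfl⟩ := hS.exists_geodesic_word g
  exact ⟨w.pmap Subtype.mk hw, by simpa [hl] using hg, by simp [List.map_pmap]⟩

lemma IsSymmGen.finite_wdist_le (hS : IsSymmGen S) (y : G) (n : ℕ) :
    {g : G | wdist S y g ≤ n}.Finite :=
  (hS.finite_wlen_le n).preimage (mul_right_injective y⁻¹).injOn

/-- A geodesic from `1` to `g` passes through the sphere of radius `n ≤ |g|`. -/
lemma IsSymmGen.exists_wlen_eq_add (hS : IsSymmGen S) {g : G} {n : ℕ} (hn : n ≤ wlen S g) :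
    ∃ y, wlen S y = n ∧ wdist S y g + n ≤ wlen S g := by
  obtain ⟨w, hw, hl, rfl⟩ := hS.exists_geodesic_word g
  have hsplit : (w.take n).prod * (w.drop n).prod = w.prod := by
    rw [← List.prod_append, List.take_append_drop]
  have h1 : wlen S (w.take n).prod ≤ n :=
    (wlen_prod_le fun x hx => hw x (List.mem_of_mem_take hx)).trans (by simp)
  have h2 : wlen S (w.drop n).prod ≤ w.length - n :=
    (wlen_prod_le fun x hx => hw x (List.mem_of_mem_drop hx)).trans (by simp)
  have h3 := hS.wlen_mul_le (w.take n).prod (w.drop n).prod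
  rw [hsplit] at h3
  refine ⟨(w.take n).prod, by omega, ?_⟩
  rw [wdist, ← hsplit, inv_mul_cancel_left, hsplit]
  omega

end WordLength

lemma growthRate_nonneg {G : Type*} [Group G] (S : Set G) : 0 ≤ growthRate S := by
  unfold growthRate growthRateOn
  rw [Filter.limsup_eq]
  refine Real.sInf_nonneg fun a ha => ?_
  obtain ⟨n, hn⟩ := ha.exists
  exact (div_nonneg (Real.log_natCast_nonneg _) n.cast_nonneg).trans hn

section PattersonSullivan

variable {G : Type*} [Group G] {S : Set G}

lemma psWeight_mul_left (H : ℝ → ℝ) (s : ℝ) (k v g : G) :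
    psWeight S H s (k * v) (k * g) = psWeight S H s v g := by
  simp [psWeight, wdist_mul_left]

lemma tsum_psWeight (H : ℝ → ℝ) (s : ℝ) (v : G) :
    ∑' g, psWeight S H s v g = ∑' g, psWeight S H s 1 g := by
  rw [← (Equiv.mulLeft v).tsum_eq]
  simpa using tsum_congr fun g => psWeight_mul_left (S := S) H s v 1 g

/-- Moving the base point from `w` to `y` changes Patterson's weights by an explicit factor. -/
lemma le_psWeight {H : ℝ → ℝ} (hmono : Monotone H) (hpos : ∀ t, 0 < H t) {ε t₀ : ℝ}
    (ht₀ : ∀ t > t₀, ∀ a > (0 : ℝ), H (a + t) ≤ Real.exp (a * ε) * H t)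
    {s b B : ℝ} (hs : 0 ≤ s) (hB : 0 < B) {w y g : G} (hy : t₀ < wdist S y g)
    (hb : (wdist S y g : ℝ) ≤ wdist S w g + b) (hwy : (wdist S w g : ℝ) ≤ B + wdist S y g) :
    ENNReal.ofReal (Real.exp (-(B * ε) - s * b)) * psWeight S H s w g ≤ psWeight S H s y g := by
  rw [psWeight, psWeight, ← ENNReal.ofReal_mul (Real.exp_pos _).le]
  refine ENNReal.ofReal_le_ofReal ?_
  have hH : H (wdist S w g) ≤ Real.exp (B * ε) * H (wdist S y g) :=
    (hmono hwy).trans (ht₀ _ hy B hB)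
  have hexp : Real.exp (-(s * (wdist S w g + b))) ≤ Real.exp (-(s * wdist S y g)) :=
    Real.exp_le_exp.2 (neg_le_neg (mul_le_mul_of_nonneg_left hb hs))
  calc Real.exp (-(B * ε) - s * b) * (H (wdist S w g) * Real.exp (-(s * wdist S w g)))
      ≤ Real.exp (-(B * ε) - s * b) *
          ((Real.exp (B * ε) * H (wdist S y g)) * Real.exp (-(s * wdist S w g))) := by gcongr
    _ = H (wdist S y g) * Real.exp (-(s * (wdist S w g + b))) := by
        have : Real.exp (-(s * (wdist S w g + b))) =
            Real.exp (-(B * ε) - s * b) * Real.exp (B * ε) * Real.exp (-(s * wdist S w g)) := by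
          rw [← Real.exp_add, ← Real.exp_add]
          ring_nf
        rw [this]
        ring
    _ ≤ H (wdist S y g) * Real.exp (-(s * wdist S y g)) :=
        mul_le_mul_of_nonneg_left hexp (hpos _).le

variable {Z : Type*} [MetricSpace Z] [MeasurableSpace Z] [BorelSpace Z] {ι : G → Z}

lemma lintegral_psApprox (H : ℝ → ℝ) (s : ℝ) (v : G) (f : Z → ℝ≥0∞) :
    ∫⁻ z, f z ∂(psApprox S ι H s v) =
      (∑' g, psWeight S H s 1 g)⁻¹ * ∑' g, psWeight S H s v g * f (ι g) := by
  simp [psApprox, lintegral_smul_measure, lintegral_sum_measure]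

lemma isProbabilityMeasure_psApprox {H : ℝ → ℝ} (hH : IsPattersonFunction S H) {s : ℝ}
    (hs : growthRate S < s) (v : G) : IsProbabilityMeasure (psApprox S ι H s v) := by
  refine ⟨?_⟩
  have h := lintegral_psApprox (S := S) (ι := ι) H s v 1
  simp only [Pi.one_apply, lintegral_one, mul_one, tsum_psWeight H s v] at h
  rw [h]
  refine ENNReal.inv_mul_cancel ?_ (hH.2.2.2.2 s hs).tsum_ofReal_ne_top
  have hpos : 0 < psWeight S H s 1 1 :=
    ENNReal.ofReal_pos.2 (mul_pos (hH.2.1 _) (Real.exp_pos _))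
  exact (hpos.trans_le (ENNReal.le_tsum 1)).ne'

/-- `μ` is the weak limit of Patterson's measures, expressed with lower integrals. -/
def IsPSLimit (S : Set G) (ι : G → Z) (μ : G → Measure Z) (H : ℝ → ℝ) (sq : ℕ → ℝ) : Prop :=
  ∀ (v : G) (f : BoundedContinuousFunction Z ℝ≥0),
    Tendsto (fun n => ∫⁻ z, f z ∂(psApprox S ι H (sq n) v)) atTop (𝓝 (∫⁻ z, f z ∂(μ v)))

lemma isPSLimit_of_tendsto_integral {μ : G → Measure Z} [∀ v, IsFiniteMeasure (μ v)]
    {H : ℝ → ℝ} (hH : IsPattersonFunction S H) {sq : ℕ → ℝ} (hsq : ∀ n, growthRate S < sq n)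
    (hlim : ∀ (v : G) (f : C(Z, ℝ)),
      Tendsto (fun n => ∫ z, f z ∂(psApprox S ι H (sq n) v)) atTop (𝓝 (∫ z, f z ∂(μ v)))) :
    IsPSLimit S ι μ H sq := by
  intro v f
  have key : ∀ ν : Measure Z, IsFiniteMeasure ν →
      ENNReal.ofReal (∫ z, ((f z : ℝ≥0) : ℝ) ∂ν) = ∫⁻ z, f z ∂ν := by
    intro ν hν
    rw [ofReal_integral_eq_lintegral_ofReal]
    · simp
    · exact f.integrable_of_nnreal ν
    · exact Eventually.of_forall fun z => (f z).coe_nonneg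
  have h := (ENNReal.continuous_ofReal.tendsto _).comp
    (hlim v ⟨fun z => ((f z : ℝ≥0) : ℝ), by fun_prop⟩)
  simp only [ContinuousMap.coe_mk] at h
  rw [key _ inferInstance] at h
  refine h.congr fun n => key _ ?_
  have := isProbabilityMeasure_psApprox (ι := ι) hH (hsq n) v
  infer_instance

variable {μ : G → Measure Z} {H : ℝ → ℝ} {sq : ℕ → ℝ}

lemma IsPSLimit.map_smul [MulAction G Z] [∀ v, IsFiniteMeasure (μ v)]
    (hμ : IsPSLimit S ι μ H sq) (hequiv : ∀ g h : G, g • ι h = ι (g * h))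
    (hcont : ∀ g : G, Continuous (fun z : Z => g • z)) (g v : G) :
    μ (g * v) = (μ v).map (fun z => g • z) := by
  refine ext_of_forall_lintegral_eq_of_IsFiniteMeasure fun f => ?_
  rw [lintegral_map (by fun_prop) (hcont g).measurable]
  refine tendsto_nhds_unique (hμ (g * v) f) ?_
  refine (hμ v (f.compContinuous ⟨_, hcont g⟩)).congr fun n => ?_
  rw [lintegral_psApprox, lintegral_psApprox]
  congr 1
  rw [← (Equiv.mulLeft g).tsum_eq (fun h => psWeight S H (sq n) (g * v) h * (f (ι h) : ℝ≥0∞))]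
  simp [psWeight_mul_left, hequiv]

lemma IsPSLimit.apply_preimage [MulAction G Z] [∀ v, IsFiniteMeasure (μ v)]
    (hμ : IsPSLimit S ι μ H sq) (hequiv : ∀ g h : G, g • ι h = ι (g * h))
    (hcont : ∀ g : G, Continuous (fun z : Z => g • z)) (g : G) {A : Set Z}
    (hA : MeasurableSet A) : μ g A = μ 1 ((fun z => g • z) ⁻¹' A) := by
  have h := hμ.map_smul hequiv hcont g 1
  rw [mul_one] at h
  rw [h, Measure.map_apply (hcont g).measurable hA]

/-- If all but finitely many `g` are closer to some point of `Y` than to `w`, up to an additive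
error `b`, then `e^{-δ b} μ_w ≤ ∑_{y ∈ Y} μ_y` on closed subsets of the boundary. -/
lemma IsPSLimit.le_sum_measure [∀ v, IsFiniteMeasure (μ v)] (hS : IsSymmGen S)
    (hμ : IsPSLimit S ι μ H sq) (hH : IsPattersonFunction S H)
    (hsq : ∀ n, growthRate S < sq n) (hlim : Tendsto sq atTop (𝓝 (growthRate S)))
    (Y : Finset G) (w : G) (b : ℝ)
    (hY : {g | ¬ ∃ y ∈ Y, (wdist S y g : ℝ) ≤ wdist S w g + b}.Finite)
    {F : Set Z} (hF : IsClosed F) (hFb : F ⊆ bdryZ ι) :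
    ENNReal.ofReal (Real.exp (-(growthRate S * b))) * μ w F ≤ ∑ y ∈ Y, μ y F := by
  set B : ℝ := 1 + ∑ y ∈ Y, (wdist S w y : ℝ)
  have hB : 0 < B := by positivity
  have hBY : ∀ y ∈ Y, ∀ g, (wdist S w g : ℝ) ≤ B + wdist S y g := by
    intro y hy g
    have h1 : (wdist S w y : ℝ) ≤ ∑ y ∈ Y, (wdist S w y : ℝ) :=
      Finset.single_le_sum (f := fun y => (wdist S w y : ℝ)) (fun _ _ => Nat.cast_nonneg _) hy
    have h2 : (wdist S w g : ℝ) ≤ wdist S w y + wdist S y g := mod_cast hS.wdist_triangle w y g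
    linarith
  have hε : ∀ ε > (0 : ℝ),
      ENNReal.ofReal (Real.exp (-(B * ε) - growthRate S * b)) * μ w F ≤ ∑ y ∈ Y, μ y F := by
    intro ε hε
    obtain ⟨t₀, ht₀⟩ := hH.2.2.1 ε hε
    set E : Set G := {g | ¬ ∃ y ∈ Y, (wdist S y g : ℝ) ≤ wdist S w g + b} ∪
      ⋃ y ∈ Y, {g | wdist S y g ≤ ⌈t₀⌉₊} with hE
    have hEfin : E.Finite :=
      hY.union (Y.finite_toSet.biUnion fun y _ => hS.finite_wdist_le y _)
    have hweight : ∀ n, ∀ g ∉ E,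
        ENNReal.ofReal (Real.exp (-(B * ε) - sq n * b)) * psWeight S H (sq n) w g ≤
          ∑ y ∈ Y, psWeight S H (sq n) y g := by
      intro n g hg
      rw [hE, mem_union, not_or] at hg
      obtain ⟨y, hy, hyb⟩ := not_not.1 hg.1
      have hfar : ⌈t₀⌉₊ < wdist S y g := not_le.1 fun hle => hg.2 (mem_biUnion hy hle)
      refine (le_psWeight hH.1 hH.2.1 ht₀ ((growthRate_nonneg S).trans (hsq n).le) hB
        ((Nat.le_ceil t₀).trans_lt (mod_cast hfar)) hyb (hBY y hy g)).trans ?_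
      exact Finset.single_le_sum (f := fun y => psWeight S H (sq n) y g) (fun _ _ => zero_le) hy
    have hf : ∀ f : BoundedContinuousFunction Z ℝ≥0, (∀ g ∈ E, f (ι g) = 0) →
        ENNReal.ofReal (Real.exp (-(B * ε) - growthRate S * b)) * ∫⁻ z, f z ∂(μ w) ≤
          ∑ y ∈ Y, ∫⁻ z, f z ∂(μ y) := by
      intro f hfE
      have hexp : Tendsto (fun n => ENNReal.ofReal (Real.exp (-(B * ε) - sq n * b))) atTop
          (𝓝 (ENNReal.ofReal (Real.exp (-(B * ε) - growthRate S * b)))) :=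
        (ENNReal.continuous_ofReal.tendsto _).comp ((Real.continuous_exp.tendsto _).comp
          (tendsto_const_nhds.sub (hlim.mul_const b)))
      refine le_of_tendsto_of_tendsto'
        (ENNReal.Tendsto.mul hexp (Or.inl (by positivity)) (hμ w f)
          (Or.inr ENNReal.ofReal_ne_top))
        (tendsto_finsetSum Y fun y _ => hμ y f) fun n => ?_
      simp only [lintegral_psApprox]
      rw [← Finset.mul_sum, ← Summable.tsum_finsetSum fun _ _ => ENNReal.summable,
        mul_left_comm, ← ENNReal.tsum_mul_left]
      gcongr with g
      rw [← Finset.sum_mul, ← mul_assoc]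
      by_cases hg : g ∈ E
      · simp [hfE g hg]
      · gcongr
        exact hweight n g hg
    have hdisj : Disjoint (ι '' E) F :=
      Set.disjoint_left.2 fun z ⟨g, _, hg⟩ hz => hFb hz ⟨g, hg⟩
    obtain ⟨r, hr, hrdisj⟩ :=
      hdisj.exists_thickenings (hEfin.image ι).isCompact hF
    have hδ : ∀ n : ℕ, (0 : ℝ) < 1 / ((n : ℝ) + 1) := fun n => by positivity
    have happ := fun v => tendsto_lintegral_thickenedIndicator_of_isClosed (μ v) hF hδ
      tendsto_one_div_add_atTop_nhds_zero_nat
    refine le_of_tendsto_of_tendsto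
      (ENNReal.Tendsto.const_mul (happ w) (Or.inr ENNReal.ofReal_ne_top))
      (tendsto_finsetSum Y fun y _ => happ y) ?_
    filter_upwards [tendsto_one_div_add_atTop_nhds_zero_nat.eventually_lt_const hr] with n hn
    refine hf _ fun g hg => thickenedIndicator_zero _ _ fun hmem => ?_
    exact Set.disjoint_left.1 hrdisj
      (Metric.self_subset_thickening hr _ (mem_image_of_mem ι hg))
      (Metric.thickening_mono hn.le F hmem)
  have hcont : Tendsto (fun ε : ℝ =>
      ENNReal.ofReal (Real.exp (-(B * ε) - growthRate S * b)) * μ w F) (𝓝[>] 0)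
      (𝓝 (ENNReal.ofReal (Real.exp (-(growthRate S * b))) * μ w F)) := by
    refine ENNReal.Tendsto.mul_const ?_ (Or.inr (measure_ne_top _ _))
    have : Continuous fun ε : ℝ =>
        ENNReal.ofReal (Real.exp (-(B * ε) - growthRate S * b)) :=
      ENNReal.continuous_ofReal.comp (by fun_prop)
    simpa using (this.tendsto 0).mono_left nhdsWithin_le_nhds
  exact le_of_tendsto hcont (eventually_mem_nhdsWithin.mono fun ε h => hε ε h)

end PattersonSullivan

section Dynamics

variable {G : Type*} [Group G] {Z : Type*} [MulAction G Z] {ι : G → Z}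

lemma smul_mem_bdryZ (hequiv : ∀ g h : G, g • ι h = ι (g * h)) (g : G) {z : Z}
    (hz : z ∈ bdryZ ι) : g • z ∈ bdryZ ι := by
  rintro ⟨h, hh⟩
  exact hz ⟨g⁻¹ * h, by rw [← hequiv, hh, inv_smul_smul]⟩

/-- A bounded parabolic point is not fixed by the whole group. -/
lemma IsBddParabolicPt.exists_smul_ne [TopologicalSpace Z] [T2Space Z]
    (hequiv : ∀ g h : G, g • ι h = ι (g * h)) (hnt : (bdryZ ι).Nontrivial)
    (hgf : ∀ ξ ∈ bdryZ ι, ξ ∈ conicalPts G ι ∨ IsBddParabolicPt G ι ξ)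
    {q : Z} (hq : IsBddParabolicPt G ι q) : ∃ g : G, g • q ≠ q := by
  by_contra! hfix
  obtain ⟨hqb, hinf, -, hproper⟩ := hq
  obtain ⟨ξ, hξ, hξq⟩ := hnt.exists_ne q
  have hstab : {g : G | g • ξ = ξ}.Finite := by
    refine (hproper {ξ} isCompact_singleton (by simpa using ⟨hξ, hξq⟩)).subset fun g hg => ?_
    exact ⟨hfix g, ξ, ⟨ξ, rfl, hg⟩, rfl⟩
  rcases hgf ξ hξ with ⟨-, gs, a, b, ha, -, hab, hconv⟩ | hpar
  · obtain ⟨hξa, hqlim⟩ := hconv q hqb hξq.symm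
    obtain rfl : q = b := tendsto_nhds_unique (by simp [hfix]) hqlim
    set K : Set Z := insert ξ (insert a (range fun n => gs n • ξ))
    have hK : IsCompact K := hξa.isCompact_insert_range.insert ξ
    have hKsub : K ⊆ bdryZ ι \ {q} := by
      rintro z (rfl | rfl | ⟨n, rfl⟩)
      · exact ⟨hξ, hξq⟩
      · exact ⟨ha, hab⟩
      · refine ⟨smul_mem_bdryZ hequiv _ hξ, fun h => hξq ?_⟩
        rw [mem_singleton_iff, ← hfix (gs n)] at h
        exact MulAction.injective _ h
    have hgs : (range gs).Finite := by
      refine (hproper K hK hKsub).subset ?_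
      rintro _ ⟨n, rfl⟩
      exact ⟨hfix _, gs n • ξ, ⟨ξ, Or.inl rfl, rfl⟩, Or.inr (Or.inr ⟨n, rfl⟩)⟩
    have : Finite (range gs) := hgs
    obtain ⟨g, hg⟩ : ∃ g, ∃ᶠ n in atTop, gs n = g := by
      obtain ⟨⟨g, hmem⟩, hg⟩ := Finite.exists_infinite_fiber (rangeFactorization gs)
      refine ⟨g, Nat.frequently_atTop_iff_infinite.2 ?_⟩
      rw [Set.infinite_coe_iff] at hg
      refine hg.mono fun n hn => ?_
      have hn' : rangeFactorization gs n = ⟨g, hmem⟩ := hn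
      exact congrArg Subtype.val hn'
    have htwo : ∀ ζ ∈ bdryZ ι, ζ ≠ ξ → ζ = q := by
      intro ζ hζ hζξ
      have hgζ : q ∈ ({g • ζ} : Set Z) := isClosed_singleton.mem_of_frequently_of_tendsto
        (hg.mono fun n hn => by simp [hn]) (hconv ζ hζ hζξ).2
      rw [mem_singleton_iff, ← hfix g] at hgζ
      exact (MulAction.injective _ hgζ).symm
    refine hinf (hstab.subset fun h _ => ?_)
    by_contra hne
    have h1 := htwo (h • ξ) (smul_mem_bdryZ hequiv h hξ) hne
    rw [← hfix h] at h1
    exact hξq (MulAction.injective _ h1)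
  · exact hpar.2.1 hstab

end Dynamics

/-- The sets `g⁻¹ (K × {q})` have bounded multiplicity in `Z × Z`, so their total mass is
finite. -/
lemma tsum_measure_mul_measure_ne_top {G : Type*} [Group G] [Countable G] {Z : Type*}
    [MetricSpace Z] [MeasurableSpace Z] [BorelSpace Z] [MulAction G Z] {S : Set G} {ι : G → Z}
    {μ : G → Measure Z} [∀ v, IsFiniteMeasure (μ v)] {H : ℝ → ℝ} {sq : ℕ → ℝ}
    (hequiv : ∀ g h : G, g • ι h = ι (g * h)) (hcont : ∀ g : G, Continuous (fun z : Z => g • z))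
    (hμ : IsPSLimit S ι μ H sq) {q : Z} (hq : IsBddParabolicPt G ι q)
    {K : Set Z} (hK : IsCompact K) (hKsub : K ⊆ bdryZ ι \ {q}) :
    ∑' g : G, μ g K * μ g {q} ≠ ⊤ := by
  have hT := hq.2.2.2 K hK hKsub
  set T : Set G := {g : G | g • q = q ∧ ((fun z : Z => g • z) '' K ∩ K).Nonempty}
  set A : G → Set (Z × Z) := fun g =>
    ((fun z : Z => g • z) ⁻¹' K) ×ˢ ((fun z : Z => g • z) ⁻¹' {q})
  have hAmeas : ∀ g, MeasurableSet (A g) := fun g =>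
    ((hcont g).measurable hK.measurableSet).prod
      ((hcont g).measurable (measurableSet_singleton q))
  have hterm : ∀ g, μ g K * μ g {q} = ∫⁻ x, (A g).indicator 1 x ∂((μ 1).prod (μ 1)) := by
    intro g
    rw [lintegral_indicator_one (hAmeas g), Measure.prod_prod,
      hμ.apply_preimage hequiv hcont g hK.measurableSet,
      hμ.apply_preimage hequiv hcont g (measurableSet_singleton q)]
  have hmult : ∀ x, ∑' g, (A g).indicator (1 : Z × Z → ℝ≥0∞) x ≤ T.encard := by
    intro x
    have hsum : ∑' g, (A g).indicator (1 : Z × Z → ℝ≥0∞) x = ({g | x ∈ A g}.encard : ℝ≥0∞) := by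
      rw [← ENNReal.tsum_set_one, tsum_subtype {g | x ∈ A g} fun _ => (1 : ℝ≥0∞)]
      rfl
    rw [hsum]
    rcases Set.eq_empty_or_nonempty {g | x ∈ A g} with h0 | ⟨g₀, hg₀⟩
    · simp [h0]
    · have hsub : (fun g => g * g₀⁻¹) '' {g | x ∈ A g} ⊆ T := by
        rintro _ ⟨g, hg, rfl⟩
        have h1 : g₀ • x.1 ∈ K := hg₀.1
        have h2 : g₀ • x.2 = q := hg₀.2
        have h3 : g • x.1 ∈ K := hg.1
        have h4 : g • x.2 = q := hg.2
        refine ⟨?_, g • x.1, ⟨g₀ • x.1, h1, by simp [mul_smul]⟩, h3⟩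
        rw [mul_smul, ← h2, inv_smul_smul, h4, h2]
      have hcard := Set.encard_le_encard hsub
      rw [(mul_left_injective g₀⁻¹).encard_image] at hcard
      exact_mod_cast hcard
  simp_rw [hterm]
  rw [← lintegral_tsum fun g => (measurable_one.indicator (hAmeas g)).aemeasurable]
  refine ((lintegral_mono hmult).trans_lt ?_).ne
  rw [lintegral_const]
  refine ENNReal.mul_lt_top ?_ (measure_lt_top _ _)
  rw [hT.encard_eq_coe_toFinset_card]
  simp

/-- Patterson–Sullivan measures on the Bowditch boundary have no atoms at bounded parabolic
points. -/
theorem ps_measures_no_atoms_at_parabolic_points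
    {G : Type*} [Group G] [Countable G] {Z : Type*} [MetricSpace Z] [CompactSpace Z]
    [MeasurableSpace Z] [BorelSpace Z] [MulAction G Z]
    (S : Set G) (hS : IsSymmGen S) (hne : ¬ IsElementaryGroup G)
    (Ps : Set (Subgroup G)) (hPs : Ps.Finite) (hrh : IsRelHypWrt G Ps)
    (ι : G → Z) (hbc : IsGeomFinBoundary G S ι)
    (μ : G → MeasureTheory.Measure Z) (hPS : IsPSMeasures S ι μ) :
    ∀ q : Z, IsBddParabolicPt G ι q → ∀ v : G, μ v {q} = 0 := by
  intro q hq
  obtain ⟨-, hequiv, hcont, -, hnt, -, -, hgf⟩ := hbc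
  obtain ⟨hfin, H, sq, hH, hsq, hsqlim, hint⟩ := hPS
  have hμ : IsPSLimit S ι μ H sq := isPSLimit_of_tendsto_integral hH hsq hint
  set δ := growthRate S
  have hvis : ∀ (v w : G) {F : Set Z}, IsClosed F → F ⊆ bdryZ ι →
      ENNReal.ofReal (Real.exp (-(δ * wdist S v w))) * μ w F ≤ μ v F := by
    intro v w F hF hFb
    have h := hμ.le_sum_measure hS hH hsq hsqlim {v} w (wdist S v w) ?_ hF hFb
    · simpa using h
    · convert Set.finite_empty
      ext g
      simpa [add_comm] using mod_cast hS.wdist_triangle v w g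
  have hqb : ({q} : Set Z) ⊆ bdryZ ι := singleton_subset_iff.2 hq.1
  have hpos : ∀ x : ℝ, ENNReal.ofReal (Real.exp x) ≠ 0 := fun x => by positivity
  suffices h1 : μ 1 {q} = 0 by
    intro v
    have h := hvis 1 v isClosed_singleton hqb
    rw [h1, nonpos_iff_eq_zero, mul_eq_zero] at h
    exact h.resolve_left (hpos _)
  by_contra hm
  obtain ⟨K, hK, hKsub, hKcov⟩ := hq.2.2.1
  have hKb : K ⊆ bdryZ ι := fun z hz => (hKsub hz).1
  have hmass : μ 1 K ≠ 0 := by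
    intro hK0
    obtain ⟨h, hh⟩ := hq.exists_smul_ne hequiv hnt hgf
    obtain ⟨p, -, hpK⟩ := hKcov (h • q) ⟨smul_mem_bdryZ hequiv h hq.1, hh⟩
    have hle : μ (p * h)⁻¹ {q} ≤ μ 1 K := by
      rw [hμ.apply_preimage hequiv hcont _ (measurableSet_singleton q)]
      refine measure_mono fun z hz => ?_
      have hz' : (p * h)⁻¹ • z = q := hz
      rw [inv_smul_eq_iff, mul_smul] at hz'
      exact hz' ▸ hpK
    have h2 := (hvis (p * h)⁻¹ 1 isClosed_singleton hqb).trans hle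
    rw [hK0, nonpos_iff_eq_zero, mul_eq_zero] at h2
    exact h2.elim (hpos _) hm
  have hupper := tsum_measure_mul_measure_ne_top hequiv hcont hμ hq hK hKsub
  refine hupper (top_unique ?_)
  calc (⊤ : ℝ≥0∞) = ∑' _ : ℕ, μ 1 K * μ 1 {q} :=
        (ENNReal.tsum_const_eq_top_of_ne_zero (mul_ne_zero hmass hm)).symm
    _ ≤ ∑' (n : ℕ) (g : wlen S ⁻¹' {n}), μ (g : G) K * μ (g : G) {q} := by
        refine ENNReal.tsum_le_tsum fun n => ?_
        have hball : (wlen S ⁻¹' {n}).Finite :=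
          (hS.finite_wlen_le n).subset fun g hg => le_of_eq hg
        have hsph := hμ.le_sum_measure hS hH hsq hsqlim hball.toFinset 1 (-n) ?_
          isClosed_singleton hqb
        · have hfib : ∑' g : wlen S ⁻¹' {n}, μ (g : G) K * μ (g : G) {q} =
              ∑ g ∈ hball.toFinset, μ g K * μ g {q} := by
            rw [← Finset.tsum_subtype' hball.toFinset fun g => μ g K * μ g {q},
              hball.coe_toFinset]
          rw [hfib]
          calc μ 1 K * μ 1 {q}
              = ENNReal.ofReal (Real.exp (-(δ * n))) * μ 1 K *
                  (ENNReal.ofReal (Real.exp (-(δ * -n))) * μ 1 {q}) := by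
                rw [mul_mul_mul_comm, ← ENNReal.ofReal_mul (Real.exp_pos _).le, ← Real.exp_add]
                simp
            _ ≤ ENNReal.ofReal (Real.exp (-(δ * n))) * μ 1 K *
                  ∑ g ∈ hball.toFinset, μ g {q} := by gcongr
            _ ≤ ∑ g ∈ hball.toFinset, μ g K * μ g {q} := by
                rw [Finset.mul_sum]
                refine Finset.sum_le_sum fun g hg => ?_
                have hgn : wdist S g 1 = n := by
                  simpa [wdist, hS.wlen_inv] using hg
                gcongr
                simpa [hgn] using hvis g 1 hK.isClosed hKb
        · refine (hS.finite_wlen_le n).subset fun g hg => ?_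
          by_contra hgn
          obtain ⟨y, hy, hyg⟩ := hS.exists_wlen_eq_add (not_le.1 hgn).le
          refine hg ⟨y, by simpa using hy, ?_⟩
          have h3 : (wdist S y g : ℝ) + n ≤ wlen S g := mod_cast hyg
          have h4 : wdist S 1 g = wlen S g := by simp [wdist]
          rw [h4]
          linarith
    _ = ∑' g : G, μ g K * μ g {q} := ENNReal.tsum_fiberwise (fun g => μ g K * μ g {q}) (wlen S)
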